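/- For every integer n ≥ 1, the sum, over all Dyck paths of length 2n and over all peaks of each path, of the heights of the peaks equals 4^(n−1). -/

import Mathlib

/-- The step associated to a letter: `true` is an up step `+1`, `false` a down step `-1`. -/
def stepVal (b : Bool) : ℤ := if b then 1 else -1

/-- Partial sum `S_i`: the sum of the first `i` steps of the word `w`. -/
def psum {L : ℕ} (w : Fin L → Bool) (i : ℕ) : ℤ :=
  ∑ j : Fin L, if (j : ℕ) < i then stepVal (w j) else 0

/-- A Dyck bridge: a `±1` word whose total sum is `0`. -/
def IsBridge {L : ℕ} (w : Fin L → Bool) : Prop := psum w L = 0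

/-- A Dyck path: a bridge all of whose partial sums are nonnegative. -/
def IsDyck {L : ℕ} (w : Fin L → Bool) : Prop :=
  IsBridge w ∧ ∀ i : ℕ, 0 ≤ psum w i

/-- A peak at (0-based) position `i`: step `i` is up and step `i+1` is down. -/
def IsPeak {L : ℕ} (w : Fin L → Bool) (i : ℕ) : Prop :=
  ∃ j k : Fin L, (j : ℕ) = i ∧ (k : ℕ) = i + 1 ∧ w j = true ∧ w k = false

/-- The height of the peak at (0-based) position `i`, i.e. the altitude
reached by its up step. -/
def peakHeight {L : ℕ} (w : Fin L → Bool) (i : ℕ) : ℤ := psum w (i + 1)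

/-- A crossing of the x-axis at (1-based) index `i`: `0 < i < L`, `S_i = 0`,
and the steps `w_i`, `w_{i+1}` (1-based) are equal. -/
def IsCrossing {L : ℕ} (w : Fin L → Bool) (i : ℕ) : Prop :=
  0 < i ∧ i < L ∧ psum w i = 0 ∧
    ∃ j k : Fin L, (j : ℕ) + 1 = i ∧ (k : ℕ) = i ∧ w j = w k

section aux
open PowerSeries

lemma exists_r : ∃ r : PowerSeries ℤ, r = X * (1 + r ^ 2) := by
  have h := congrArg (fun f => expand 2 two_ne_zero (map (Nat.castRingHom ℤ) f))
    catalanSeries_sq_mul_X_add_one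
  simp only [map_add, map_mul, map_pow, map_one, map_X, expand_X] at h
  refine ⟨X * expand 2 two_ne_zero (map (Nat.castRingHom ℤ) catalanSeries), ?_⟩
  linear_combination (-X) * h

lemma uniq (H : ℕ → PowerSeries ℤ) (h0 : H 0 = 0)
    (hs : ∀ k, H (k + 1) = X * (H (k + 2) + H k)) (k : ℕ) : H k = 0 := by
  have key : ∀ m k, coeff m (H k) = 0 := by
    intro m
    induction m with
    | zero =>
      intro k
      cases k with
      | zero => simp [h0]
      | succ k => rw [hs]; simp
    | succ m ih =>
      intro k
      cases k with
      | zero => simp [h0]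
      | succ k => rw [hs, coeff_succ_X_mul, map_add, ih, ih, add_zero]
  ext m
  simp [key]

lemma core (d p : ℕ → ℕ → ℤ) (d0 : ∀ m, d m 0 = 0)
    (d1 : ∀ k, d 0 k = if k = 1 then 1 else 0)
    (d2 : ∀ m k, d (m + 1) (k + 1) = d m (k + 2) + d m k)
    (p0 : ∀ m, p m 0 = 0) (p1 : ∀ k, p 0 k = 0)
    (p2 : ∀ k, p 1 k = 0)
    (p3 : ∀ m k, p (m + 2) (k + 1) = p (m + 1) (k + 2) + p (m + 1) k + (k + 1) * d m (k + 1))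
    (n : ℕ) : p (2 * n + 2) 1 = 4 ^ n := by
  obtain ⟨r, hr⟩ := exists_r
  let D : ℕ → PowerSeries ℤ := fun k => mk fun m => d m k
  let P : ℕ → PowerSeries ℤ := fun k => mk fun m => p m k
  have hD0 : D 0 = 0 := by ext m; simp [D, d0]
  have hP0 : P 0 = 0 := by ext m; simp [P, p0]
  have hD : ∀ k, D (k + 1) = (if k = 0 then 1 else 0) + X * (D (k + 2) + D k) := by
    intro k
    ext m
    cases m with
    | zero => by_cases hk : k = 0 <;> simp [D, d1, hk]
    | succ m =>
      rw [map_add, coeff_succ_X_mul]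
      by_cases hk : k = 0 <;> simp [D, d2, hk, coeff_one]
  have hP : ∀ k : ℕ, P (k + 1) = X * (P (k + 2) + P k) + X ^ 2 * ((k : PowerSeries ℤ) + 1) * D (k + 1) := by
    intro k
    have e : X ^ 2 * ((k : PowerSeries ℤ) + 1) * D (k + 1) = X * (X * (C ((k : ℤ) + 1) * D (k + 1))) := by
      simp; ring
    rw [e]
    ext m
    match m with
    | 0 => simp [P, p1]
    | 1 => rw [map_add, coeff_succ_X_mul, coeff_succ_X_mul]; simp [P, p1, p2]
    | m + 2 =>
      rw [map_add, coeff_succ_X_mul, coeff_succ_X_mul, coeff_succ_X_mul, coeff_C_mul]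
      simp [P, D, p3]
  have hG : ∀ k, X * D k + (if k = 0 then 1 else 0) - r ^ k = 0 := by
    apply uniq
    · simp [hD0]
    · intro k
      rw [hD k]
      by_cases hk : k = 0
      · subst hk
        simp only [if_true, hD0]
        simp
        linear_combination -hr
      · simp [hk]
        linear_combination (-r ^ k) * hr
  have hPr : ∀ k : ℕ, 2 * (1 - r ^ 2) ^ 2 * P k
      - k * r ^ (k + 1) * ((k + 1) - (k - 1) * r ^ 2) = 0 := by
    apply uniq
    · simp [hP0]
    · intro k
      have hg := hG (k + 1)
      rw [hP k]
      simp only [Nat.add_eq_zero_iff, one_ne_zero, and_false, if_false] at hg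
      push_cast
      linear_combination (2 * (1 - r ^ 2) ^ 2 * X * ((k : PowerSeries ℤ) + 1)) * hg
        - (((k : PowerSeries ℤ) + 1) * r ^ (k + 1) * ((k + 2) - k * r ^ 2)) * hr
  have h1 := hPr 1
  have hz : (1 + r ^ 2) ^ 2 * ((1 - 4 * X ^ 2) * P 1 - X ^ 2) * 2 = 0 := by
    have a1 : r ^ 2 = X ^ 2 * (1 + r ^ 2) ^ 2 := by
      nth_rewrite 1 [hr]; ring
    push_cast at h1
    linear_combination h1 + (2 - 4 * 2 * P 1 * (-1)) * a1
  have hne : (1 + r ^ 2 : PowerSeries ℤ) ≠ 0 := by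
    intro h
    rw [h] at hr
    rw [hr] at h
    simp at h
  have hne2 : (2 : PowerSeries ℤ) ≠ 0 := by
    intro h
    have h2 := congrArg (coeff 0) h
    rw [show (2 : PowerSeries ℤ) = C 2 by simp, coeff_zero_C] at h2
    simp at h2
  have hf : P 1 = X * (X * (C 4 * P 1)) + X * X := by
    have := (mul_eq_zero.mp ((mul_eq_zero.mp hz).resolve_right hne2)).resolve_left
      (pow_ne_zero _ hne)
    have e4 : (C (4 : ℤ) : PowerSeries ℤ) = 4 := by simp
    rw [e4]
    linear_combination this
  induction n with
  | zero =>
    have := congrArg (coeff 2) hf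
    rw [map_add, coeff_succ_X_mul, coeff_succ_X_mul, coeff_succ_X_mul] at this
    simpa [P, p1] using this
  | succ n ih =>
    have := congrArg (coeff (2 * n + 2 + 2)) hf
    rw [map_add, coeff_succ_X_mul, coeff_succ_X_mul, coeff_succ_X_mul, coeff_C_mul] at this
    simp [P, ih, coeff_X] at this
    rw [show 2 * (n + 1) + 2 = 2 * n + 2 + 2 by ring, this, pow_succ, mul_comm]

end aux

section comb
open scoped Classical

lemma psum_zero {L : ℕ} (w : Fin L → Bool) : psum w 0 = 0 := by simp [psum]

lemma psum_cons {L : ℕ} (b : Bool) (w : Fin L → Bool) (i : ℕ) :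
    psum (Fin.cons b w : Fin (L + 1) → Bool) (i + 1) = stepVal b + psum w i := by
  simp [psum, Fin.sum_univ_succ]

def Good {L : ℕ} (h : ℤ) (w : Fin L → Bool) : Prop :=
  h + psum w L = 0 ∧ ∀ i : ℕ, 0 ≤ h + psum w i

lemma good_cons {L : ℕ} (h : ℤ) (b : Bool) (w : Fin L → Bool) :
    Good h (Fin.cons b w : Fin (L + 1) → Bool) ↔ 0 ≤ h ∧ Good (h + stepVal b) w := by
  unfold Good
  rw [psum_cons]
  constructor
  · rintro ⟨h1, h2⟩
    refine ⟨by simpa [psum_zero] using h2 0, by linarith, fun i => ?_⟩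
    have := h2 (i + 1)
    rw [psum_cons] at this
    linarith
  · rintro ⟨h0, h1, h2⟩
    refine ⟨by linarith, fun i => ?_⟩
    cases i with
    | zero => simpa [psum_zero] using h0
    | succ i => rw [psum_cons]; have := h2 i; linarith

lemma good_neg {L : ℕ} (h : ℤ) (hh : h < 0) (w : Fin L → Bool) : ¬ Good h w := by
  rintro ⟨_, h2⟩
  have := h2 0
  rw [psum_zero] at this
  linarith

def FD {L : ℕ} (w : Fin L → Bool) : Prop := ∃ j : Fin L, (j : ℕ) = 0 ∧ w j = false

lemma fd_cons {L : ℕ} (b : Bool) (w : Fin L → Bool) :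
    FD (Fin.cons b w : Fin (L + 1) → Bool) ↔ b = false := by
  constructor
  · rintro ⟨j, hj, h⟩
    have : j = 0 := Fin.ext hj
    subst this
    simpa using h
  · intro h
    exact ⟨0, rfl, by simpa using h⟩

lemma peak_cons_zero {L : ℕ} (b : Bool) (w : Fin L → Bool) :
    IsPeak (Fin.cons b w : Fin (L + 1) → Bool) 0 ↔ b = true ∧ FD w := by
  constructor
  · rintro ⟨j, k, hj, hk, h1, h2⟩
    have : j = 0 := Fin.ext hj
    subst this
    obtain ⟨k', rfl⟩ : ∃ k', k = Fin.succ k' := Fin.exists_succ_eq_of_ne_zero (by rintro rfl; simp at hk) |>.imp fun _ h => h.symm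
    exact ⟨by simpa using h1, k', by simpa using hk, by simpa using h2⟩
  · rintro ⟨h, j, hj, h2⟩
    exact ⟨0, j.succ, rfl, by simp [hj], by simpa using h, by simpa using h2⟩

lemma peak_cons_succ {L : ℕ} (b : Bool) (w : Fin L → Bool) (i : ℕ) :
    IsPeak (Fin.cons b w : Fin (L + 1) → Bool) (i + 1) ↔ IsPeak w i := by
  constructor
  · rintro ⟨j, k, hj, hk, h1, h2⟩
    obtain ⟨k', rfl⟩ : ∃ k', k = Fin.succ k' := Fin.exists_succ_eq_of_ne_zero (by rintro rfl; simp at hk) |>.imp fun _ h => h.symm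
    obtain ⟨j', rfl⟩ : ∃ k', j = Fin.succ k' := Fin.exists_succ_eq_of_ne_zero (by rintro rfl; simp at hj) |>.imp fun _ h => h.symm
    exact ⟨j', k', by simpa using hj, by simpa using hk, by simpa using h1, by simpa using h2⟩
  · rintro ⟨j, k, hj, hk, h1, h2⟩
    exact ⟨j.succ, k.succ, by simp [hj], by simp [hk], by simpa using h1, by simpa using h2⟩

lemma sum_cons {L : ℕ} (f : (Fin (L + 1) → Bool) → ℤ) :
    ∑ w, f w = ∑ w : Fin L → Bool, f (Fin.cons true w) + ∑ w : Fin L → Bool, f (Fin.cons false w) := by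
  rw [← (Fin.consEquiv (fun _ : Fin (L + 1) => Bool)).sum_comp, Fintype.sum_prod_type]
  simp [Fin.consEquiv]

noncomputable def DD (L : ℕ) (h : ℤ) : ℤ := ∑ w : Fin L → Bool, if Good h w then 1 else 0
noncomputable def QQ (L : ℕ) (h : ℤ) : ℤ := ∑ w : Fin L → Bool, if Good h w ∧ FD w then 1 else 0
noncomputable def EE (L : ℕ) (h : ℤ) : ℤ := ∑ w : Fin L → Bool, if Good h w then
  ∑ i ∈ Finset.range L, (if IsPeak w i then h + psum w (i + 1) else 0) else 0

lemma DD_neg (L : ℕ) (h : ℤ) (hh : h < 0) : DD L h = 0 := by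
  simp [DD, good_neg h hh]

lemma EE_neg (L : ℕ) (h : ℤ) (hh : h < 0) : EE L h = 0 := by
  simp [EE, good_neg h hh]

lemma DD_zero (h : ℤ) : DD 0 h = if h = 0 then 1 else 0 := by
  have : ∀ w : Fin 0 → Bool, Good h w ↔ h = 0 := by
    intro w
    simp only [Good, psum, Finset.univ_eq_empty, Finset.sum_empty, add_zero]
    constructor
    · exact fun h => h.1
    · rintro rfl; simp
  simp [DD, this]

lemma DD_succ (L : ℕ) (h : ℤ) (hh : 0 ≤ h) : DD (L + 1) h = DD L (h + 1) + DD L (h - 1) := by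
  unfold DD
  rw [sum_cons]
  simp only [good_cons, hh, true_and]
  simp [stepVal, sub_eq_add_neg]

lemma QQ_zero (h : ℤ) : QQ 0 h = 0 := by
  have : ∀ w : Fin 0 → Bool, ¬ FD w := by rintro w ⟨j, _⟩; exact j.elim0
  simp [QQ, this]

lemma QQ_succ (L : ℕ) (h : ℤ) (hh : 0 ≤ h) : QQ (L + 1) h = DD L (h - 1) := by
  unfold DD QQ
  rw [sum_cons]
  simp only [good_cons, fd_cons, hh, true_and]
  simp [stepVal, sub_eq_add_neg]

lemma EE_zero (h : ℤ) : EE 0 h = 0 := by simp [EE]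

lemma EE_succ (L : ℕ) (h : ℤ) (hh : 0 ≤ h) :
    EE (L + 1) h = EE L (h + 1) + EE L (h - 1) + (h + 1) * QQ L (h + 1) := by
  unfold EE QQ
  rw [sum_cons]
  simp only [good_cons, hh, true_and, Finset.sum_range_succ', peak_cons_succ, peak_cons_zero,
    psum_cons, psum_zero]
  rw [Finset.mul_sum, add_right_comm]
  conv_rhs => rw [← Finset.sum_add_distrib]
  congr 1
  · apply Finset.sum_congr rfl
    intro w _
    by_cases h1 : Good (h + 1) w <;> by_cases h2 : FD w <;> simp [stepVal, h1, h2, add_assoc]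
  · simp [stepVal, sub_eq_add_neg, add_assoc]

end comb

open scoped Classical in
/-- For every integer `n ≥ 1`, the sum, over all Dyck paths of
length `2n` and over all peaks of each path, of the heights of the peaks
equals `4^(n-1)`. -/
theorem stmt_5 (n : ℕ) (hn : 1 ≤ n) :
    (∑ w ∈ Finset.univ.filter (fun w : Fin (2 * n) → Bool => IsDyck w),
      ∑ i ∈ Finset.range (2 * n),
        if IsPeak w i then peakHeight w i else 0) = 4 ^ (n - 1) := by
  have key := core (fun m k => DD m ((k : ℤ) - 1)) (fun m k => EE m ((k : ℤ) - 1))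
    (fun m => DD_neg _ _ (by simp))
    (fun k => by
      rw [DD_zero]
      have : ((k : ℤ) - 1 = 0) ↔ k = 1 := by omega
      simp [this])
    (fun m k => by
      have := DD_succ m (k : ℤ) (by positivity)
      push_cast
      rw [show (k : ℤ) + 1 - 1 = k by ring, show (k : ℤ) + 2 - 1 = k + 1 by ring, this])
    (fun m => EE_neg _ _ (by simp))
    (fun k => EE_zero _)
    (fun k => by
      cases k with
      | zero => exact EE_neg _ _ (by simp)
      | succ k =>
        have := EE_succ 0 (k : ℤ) (by positivity)
        rw [EE_zero, EE_zero, QQ_zero] at this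
        simpa using this)
    (fun m k => by
      have := EE_succ (m + 1) (k : ℤ) (by positivity)
      rw [QQ_succ _ _ (by positivity)] at this
      push_cast
      rw [show (k : ℤ) + 1 - 1 = k by ring, show (k : ℤ) + 2 - 1 = k + 1 by ring, this]
      rw [show (k : ℤ) + 1 - 1 = k by ring])
    (n - 1)
  rw [← key, show 2 * (n - 1) + 2 = 2 * n by omega]
  rw [Finset.sum_filter]
  unfold EE
  apply Finset.sum_congr rfl
  intro w _
  have hg : IsDyck w ↔ Good (((1 : ℕ) : ℤ) - 1) w := by simp [Good, IsDyck, IsBridge]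
  by_cases hw : IsDyck w
  · rw [if_pos hw, if_pos (hg.mp hw)]
    simp [peakHeight]
  · rw [if_neg hw, if_neg (fun h => hw (hg.mpr h))]
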